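/- arXiv:1307.6540 — 2 statements merged into one kernel-verified Lean document; each statement's English description precedes it below -/
import Mathlib

section
/- Let c : ℝ^d × ℝ^d → [0,∞] be Borel measurable and symmetric, and let μ be a Borel probability measure on ℝ^d. Then F_∞^OT[μ] = inf { ∫_{ℝ^d×ℝ^d} c(x,y) dμ₂(x,y) : μ₂ = ∫_{P(ℝ^d)} Q⊗Q dν(Q) and μ = ∫_{P(ℝ^d)} Q dν(Q) for some Borel probability measure ν on the space P(ℝ^d) of Borel probability measures on ℝ^d }. Moreover, γ = ∫ Q^⊗∞ dν(Q) is a minimizer of C_∞ over { γ ∈ P_sym^∞(ℝ^d) : γ ↦ μ } if and only if μ₂ = ∫ Q⊗Q dν(Q) attains the infimum above. -/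
open MeasureTheory ENNReal Filter Topology ProbabilityTheory

noncomputable section

/-- `ℝ^d` with the Euclidean norm. -/
abbrev Ed (d : ℕ) := EuclideanSpace ℝ (Fin d)

/-- A Borel probability measure on the countable product `(ℝ^d)^ℕ` is *exchangeable*
(symmetric) if it is invariant under every finite permutation of the coordinates. -/
def IsExchangeable {d : ℕ} (γ : Measure (ℕ → Ed d)) : Prop :=
  ∀ σ : Equiv.Perm ℕ, {n : ℕ | σ n ≠ n}.Finite →
    γ.map (fun x n => x (σ n)) = γ

/-- `γ ↦ μ` : the pushforward of `γ` under every coordinate projection is `μ`. -/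
def HasMarginal {d : ℕ} (γ : Measure (ℕ → Ed d)) (μ : Measure (Ed d)) : Prop :=
  ∀ n : ℕ, γ.map (fun x => x n) = μ

/-- The infinite-body cost `C_∞[γ] = ∫ c(x₁,x₂) dγ`. -/
def Cinf {d : ℕ} (c : Ed d → Ed d → ℝ≥0∞) (γ : Measure (ℕ → Ed d)) : ℝ≥0∞ :=
  ∫⁻ x, c (x 0) (x 1) ∂γ

/-- The optimal cost of the infinite-body optimal transport problem,
`F_∞^OT[μ] = inf { C_∞[γ] : γ ∈ P_sym^∞(ℝ^d), γ ↦ μ }`. -/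
def FinfOT {d : ℕ} (c : Ed d → Ed d → ℝ≥0∞) (μ : Measure (Ed d)) : ℝ≥0∞ :=
  ⨅ (γ : Measure (ℕ → Ed d)) (_ : IsProbabilityMeasure γ) (_ : IsExchangeable γ)
    (_ : HasMarginal γ μ), Cinf c γ

/-- `μ₂` is the mixture `∫ Q ⊗ Q dν(Q)` of product measures. -/
def IsMixtureOfSquares {d : ℕ} (μ₂ : Measure (Ed d × Ed d))
    (ν : Measure (Measure (Ed d))) : Prop :=
  ∀ s : Set (Ed d × Ed d), MeasurableSet s → μ₂ s = ∫⁻ Q, (Q.prod Q) s ∂ν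

/-- `μ` is the mixture (barycenter) `∫ Q dν(Q)`. -/
def IsMixture {d : ℕ} (μ : Measure (Ed d)) (ν : Measure (Measure (Ed d))) : Prop :=
  ∀ s : Set (Ed d), MeasurableSet s → μ s = ∫⁻ Q, Q s ∂ν

/-- `γ` is the mixture `∫ Q^⊗∞ dν(Q)` of infinite product measures, characterized
through its finite-dimensional marginals. -/
def IsMixtureOfInfinitePowers {d : ℕ} (γ : Measure (ℕ → Ed d))
    (ν : Measure (Measure (Ed d))) : Prop :=
  ∀ n : ℕ, ∀ s : Set (Fin n → Ed d), MeasurableSet s →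
    γ.map (fun x (i : Fin n) => x i.val) s = ∫⁻ Q, Measure.pi (fun _ : Fin n => Q) s ∂ν

/-- `ν` is a Borel probability measure on the space `P(ℝ^d)` of Borel probability
measures on `ℝ^d`. -/
def IsProbOnProb {d : ℕ} (ν : Measure (Measure (Ed d))) : Prop :=
  IsProbabilityMeasure ν ∧ ∀ᵐ Q ∂ν, IsProbabilityMeasure Q

theorem aux_perm (σ : ℕ → ℕ) (hσ : Function.Injective σ) (I : Finset ℕ) :
    ∃ τ : Equiv.Perm ℕ, {n : ℕ | τ n ≠ n}.Finite ∧ ∀ i ∈ I, τ i = σ i := by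
  classical
  let N : Finset ℕ := I ∪ I.image σ
  let f : I → N := fun i => ⟨i.1, Finset.mem_union_left _ i.2⟩
  let g : I → N := fun i => ⟨σ i.1, Finset.mem_union_right _ (Finset.mem_image_of_mem _ i.2)⟩
  obtain ⟨τ, hτ⟩ := Equiv.Perm.exists_extending_pair f g
    (fun a b h => Subtype.ext (congrArg (fun z : N => z.1) h))
    (fun a b h => Subtype.ext (hσ (congrArg (fun z : N => z.1) h)))
  refine ⟨Equiv.Perm.ofSubtype τ, ?_, ?_⟩
  · refine N.finite_toSet.subset ?_
    intro n hn
    by_contra h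
    exact hn (Equiv.Perm.ofSubtype_apply_of_not_mem τ h)
  · intro i hi
    have h1 : i ∈ N := Finset.mem_union_left _ hi
    rw [Equiv.Perm.ofSubtype_apply_of_mem τ h1]
    have := hτ ⟨i, hi⟩
    simp only [f, g] at this
    rw [this]

theorem aux_spread {d : ℕ} (γ : Measure (ℕ → Ed d)) [IsProbabilityMeasure γ]
    (hγ : IsExchangeable γ) (σ : ℕ → ℕ) (hσ : Function.Injective σ) :
    γ.map (fun x n => x (σ n)) = γ := by
  have hm : ∀ ρ : ℕ → ℕ, Measurable (fun (x : ℕ → Ed d) n => x (ρ n)) := fun ρ => by fun_prop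
  have key : ∀ I : Finset ℕ, (γ.map (fun x n => x (σ n))).map I.restrict = γ.map I.restrict := by
    intro I
    obtain ⟨τ, h1, h2⟩ := aux_perm σ hσ I
    conv_rhs => rw [← hγ τ h1]
    rw [Measure.map_map (Finset.measurable_restrict I) (hm _),
      Measure.map_map (Finset.measurable_restrict I) (hm _)]
    congr 1
    ext x i
    simp [Finset.restrict, h2 i.1 i.2]
  have (I : Finset ℕ) : IsProbabilityMeasure (γ.map I.restrict) :=
    Measure.isProbabilityMeasure_map (Finset.measurable_restrict I).aemeasurable
  exact IsProjectiveLimit.unique (P := fun I : Finset ℕ => γ.map I.restrict) key (fun I => rfl)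

theorem aux_sq (a b : ℝ≥0∞) (ha : a ≠ ∞) (hb : b ≠ ∞) :
    ENNReal.ofReal ((a.toReal - b.toReal) ^ 2) + 2 * (a * b) = a * a + b * b := by
  lift a to NNReal using ha
  lift b to NNReal using hb
  rw [← ENNReal.toReal_eq_toReal_iff' (by finiteness) (by finiteness)]
  rw [ENNReal.toReal_add (by finiteness) (by finiteness),
    ENNReal.toReal_add (by finiteness) (by finiteness), ENNReal.toReal_ofReal (by positivity)]
  simp
  ring

/-- de Finetti for pairs -/
theorem aux_deFinetti {d : ℕ} (γ : Measure (ℕ → Ed d)) [IsProbabilityMeasure γ]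
    (hγ : IsExchangeable γ) : ∃ κ : Kernel (ℕ → Ed d) (Ed d), IsMarkovKernel κ ∧
      ∀ A C : Set (Ed d), MeasurableSet A → MeasurableSet C →
        γ ((fun x => (x 0, x 1)) ⁻¹' (A ×ˢ C)) = ∫⁻ y, κ y A * κ y C ∂γ := by
  let T : (ℕ → Ed d) → (ℕ → Ed d) := fun x n => x (n + 1)
  have hT : Measurable T := by fun_prop
  have hTγ : γ.map T = γ := aux_spread γ hγ (fun n => n + 1) (add_left_injective 1)
  have hU := aux_spread γ hγ (fun n => if n = 0 then 0 else n + 1) (by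
    intro a b h
    dsimp only at h
    split_ifs at h <;> omega)
  have hUm : Measurable (fun (x : ℕ → Ed d) n => x ((fun n => if n = 0 then 0 else n + 1) n)) := by
    fun_prop
  let κ := condDistrib (fun x : ℕ → Ed d => x 0) T γ
  have hκ : γ ⊗ₘ κ = γ.map (fun x => (T x, x 0)) := by
    have := compProd_map_condDistrib (mβ := MeasurableSpace.pi) (X := T) (Y := fun x : ℕ → Ed d => x 0) (μ := γ)
      (measurable_pi_apply 0).aemeasurable
    rwa [hTγ] at this
  have stat : ∀ f : (ℕ → Ed d) → ℝ≥0∞, Measurable f → ∫⁻ x, f (T x) ∂γ = ∫⁻ x, f x ∂γ := by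
    intro f hf
    conv_rhs => rw [← hTγ]
    rw [lintegral_map hf hT]
  have key : ∀ A, MeasurableSet A → ∀ h : (ℕ → Ed d) → ℝ≥0∞, Measurable h →
      ∫⁻ x, A.indicator 1 (x 0) * h (T x) ∂γ = ∫⁻ y, κ y A * h y ∂γ := by
    intro A hA h hh
    have hi : Measurable (A.indicator (1 : Ed d → ℝ≥0∞)) := measurable_one.indicator hA
    have e1 : ∫⁻ p, A.indicator 1 p.2 * h p.1 ∂(γ.map (fun x => (T x, x 0)))
        = ∫⁻ x, A.indicator 1 (x 0) * h (T x) ∂γ := by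
      rw [lintegral_map (by fun_prop) (by fun_prop)]
    rw [← e1, ← hκ, Measure.lintegral_compProd (by fun_prop)]
    refine lintegral_congr fun y => ?_
    dsimp only
    rw [lintegral_mul_const _ hi, lintegral_indicator_one hA]
  have key2 : ∀ A, MeasurableSet A → ∀ h : (ℕ → Ed d) → ℝ≥0∞, Measurable h →
      ∫⁻ x, A.indicator 1 (x 0) * h (T (T x)) ∂γ = ∫⁻ y, κ y A * h y ∂γ := by
    intro A hA h hh
    have hi : Measurable (A.indicator (1 : Ed d → ℝ≥0∞)) := measurable_one.indicator hA
    rw [← key A hA h hh]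
    conv_rhs => rw [← hU]
    rw [lintegral_map (by fun_prop) hUm]
    refine lintegral_congr fun x => ?_
    simp [T]
  have ae : ∀ A, MeasurableSet A → ∀ᵐ x ∂γ, κ (T x) A = κ (T (T x)) A := by
    intro A hA
    have ha : Measurable fun y => κ y A := κ.measurable_coe hA
    have haT : Measurable fun y => κ (T y) A := ha.comp hT
    have haTT : Measurable fun y => κ (T (T y)) A := haT.comp hT
    have le1 : ∀ y, κ y A ≤ 1 := fun y => prob_le_one
    have nt : ∀ y, κ y A ≠ ∞ := fun y => measure_ne_top _ _
    set J := ∫⁻ y, κ y A * κ y A ∂γ with hJ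
    have hJt : J ≠ ∞ := by
      refine ne_of_lt (lt_of_le_of_lt (lintegral_mono (g := fun _ => 1) fun y =>
        mul_le_one' (le1 y) (le1 y)) (by simp))
    have e1 : ∫⁻ x, κ (T x) A * κ (T x) A ∂γ = J := stat (fun y => κ y A * κ y A) (ha.mul ha)
    have e2 : ∫⁻ x, κ (T (T x)) A * κ (T (T x)) A ∂γ = J := by
      rw [stat (fun y => κ (T y) A * κ (T y) A) (haT.mul haT), e1]
    have e3 : ∫⁻ x, κ (T x) A * κ (T (T x)) A ∂γ = J := by
      rw [stat (fun y => κ y A * κ (T y) A) (ha.mul haT), ← key A hA _ haT,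
        key2 A hA (fun y => κ y A) ha]
    have hD : Measurable fun x => ENNReal.ofReal
        (((κ (T x) A).toReal - (κ (T (T x)) A).toReal) ^ 2) := by fun_prop
    have e4 : ∫⁻ x, (ENNReal.ofReal (((κ (T x) A).toReal - (κ (T (T x)) A).toReal) ^ 2)
        + 2 * (κ (T x) A * κ (T (T x)) A)) ∂γ = J + J := by
      simp_rw [aux_sq _ _ (nt _) (nt _)]
      rw [lintegral_add_left (by fun_prop), e1, e2]
    rw [lintegral_add_left hD, lintegral_const_mul _ (by fun_prop), e3, two_mul] at e4
    have e5 : ∫⁻ x, ENNReal.ofReal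
        (((κ (T x) A).toReal - (κ (T (T x)) A).toReal) ^ 2) ∂γ = 0 := by
      have : J + J ≠ ∞ := by finiteness
      exact (ENNReal.add_left_inj this).mp (by rw [e4, zero_add])
    rw [lintegral_eq_zero_iff hD] at e5
    filter_upwards [e5] with x hx
    rw [← ENNReal.toReal_eq_toReal_iff' (nt _) (nt _)]
    have h0 : ((κ (T x) A).toReal - (κ (T (T x)) A).toReal) ^ 2 ≤ 0 := by simpa using hx
    nlinarith [sq_nonneg ((κ (T x) A).toReal - (κ (T (T x)) A).toReal),
      pow_eq_zero_iff (two_ne_zero) |>.mp (le_antisymm h0 (sq_nonneg _))]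
  refine ⟨κ, inferInstance, fun A C hA hC => ?_⟩
  have ha : Measurable fun y => κ y A := κ.measurable_coe hA
  have haT : Measurable fun y => κ (T y) A := ha.comp hT
  have hi : Measurable (A.indicator (1 : Ed d → ℝ≥0∞)) := measurable_one.indicator hA
  have hiC : Measurable (C.indicator (1 : Ed d → ℝ≥0∞)) := measurable_one.indicator hC
  have hp : Measurable fun x : ℕ → Ed d => (x 0, x 1) := by fun_prop
  calc γ ((fun x => (x 0, x 1)) ⁻¹' (A ×ˢ C))
      = ∫⁻ x, A.indicator 1 (x 0) * C.indicator 1 (T x 0) ∂γ := by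
        rw [← lintegral_indicator_one (hp (hA.prod hC))]
        refine lintegral_congr fun x => ?_
        by_cases h0 : x 0 ∈ A <;> by_cases h1 : x 1 ∈ C <;> simp [Set.indicator, h0, h1, T]
    _ = ∫⁻ y, κ y A * C.indicator 1 (y 0) ∂γ :=
        key A hA (fun y => C.indicator 1 (y 0)) (by fun_prop)
    _ = ∫⁻ x, κ (T x) A * C.indicator 1 (T x 0) ∂γ :=
        (stat (fun y => κ y A * C.indicator 1 (y 0)) (by fun_prop)).symm
    _ = ∫⁻ x, κ (T (T x)) A * C.indicator 1 (T x 0) ∂γ := by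
        refine lintegral_congr_ae ?_
        filter_upwards [ae A hA] with x hx
        rw [hx]
    _ = ∫⁻ x, κ (T x) A * C.indicator 1 (x 0) ∂γ :=
        stat (fun y => κ (T y) A * C.indicator 1 (y 0)) (by fun_prop)
    _ = ∫⁻ x, C.indicator 1 (x 0) * κ (T x) A ∂γ := by simp_rw [mul_comm]
    _ = ∫⁻ y, κ y A * κ y C ∂γ := by
        rw [key C hC (fun y => κ y A) ha]; simp_rw [mul_comm]

/-- The infinite power, with a default. -/
def auxPow {d : ℕ} (Q : Measure (Ed d)) : Measure (ℕ → Ed d) :=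
  open Classical in
  if IsProbabilityMeasure Q then Measure.infinitePi (fun _ => Q) else Measure.dirac 0

theorem auxPow_eq {d : ℕ} (Q : Measure (Ed d)) [h : IsProbabilityMeasure Q] :
    auxPow Q = Measure.infinitePi (fun _ => Q) := if_pos h

instance {d : ℕ} (Q : Measure (Ed d)) : IsProbabilityMeasure (auxPow Q) := by
  unfold auxPow
  split_ifs <;> infer_instance

theorem measurable_auxPow {d : ℕ} : Measurable (auxPow (d := d)) := by
  classical
  refine Measurable.measure_of_isPiSystem_of_isProbabilityMeasure
    generateFrom_squareCylinders.symm
    (isPiSystem_squareCylinders (fun _ ↦ MeasurableSpace.isPiSystem_measurableSet) (by simp)) ?_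
  rintro s ⟨I, t, ht, rfl⟩
  have ht' : ∀ i, MeasurableSet (t i) := fun i => ht i (Set.mem_univ i)
  have hP : MeasurableSet {Q : Measure (Ed d) | IsProbabilityMeasure Q} := by
    have : {Q : Measure (Ed d) | IsProbabilityMeasure Q} = (fun Q => Q Set.univ) ⁻¹' {1} := by
      ext Q
      exact isProbabilityMeasure_iff
    rw [this]
    exact Measure.measurable_coe MeasurableSet.univ (measurableSet_singleton 1)
  have : (fun Q : Measure (Ed d) => auxPow Q ((I : Set ℕ).pi t)) =
      fun Q => if IsProbabilityMeasure Q then ∏ i ∈ I, Q (t i)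
        else (Measure.dirac (0 : ℕ → Ed d)) ((I : Set ℕ).pi t) := by
    ext Q
    split_ifs with h
    · rw [auxPow_eq, Measure.infinitePi_pi _ (fun i _ => ht' i)]
    · rw [auxPow, if_neg h]
  rw [this]
  refine Measurable.ite hP ?_ measurable_const
  exact Finset.measurable_prod _ fun i _ => Measure.measurable_coe (ht' i)

theorem aux_exch {d : ℕ} (Q : Measure (Ed d)) [IsProbabilityMeasure Q] (σ : Equiv.Perm ℕ) :
    (Measure.infinitePi (fun _ : ℕ => Q)).map (fun x n => x (σ n)) =
      Measure.infinitePi (fun _ => Q) := by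
  classical
  refine Measure.eq_infinitePi _ fun s t ht => ?_
  rw [Measure.map_apply (by fun_prop) (MeasurableSet.pi s.countable_toSet fun i _ => ht i)]
  have : (fun (x : ℕ → Ed d) n => x (σ n)) ⁻¹' ((s : Set ℕ).pi t) =
      ((s.map σ.toEmbedding : Finset ℕ) : Set ℕ).pi (fun i => t (σ.symm i)) := by
    ext x
    simp only [Set.mem_preimage, Set.mem_pi, Finset.mem_coe, Finset.mem_map_equiv]
    exact ⟨fun h i hi => by simpa using h _ hi, fun h i hi => by simpa using h (σ i) (by simpa using hi)⟩
  rw [this, Measure.infinitePi_pi _ (fun i _ => ht _), Finset.prod_map]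
  simp

theorem aux_pair {d : ℕ} (Q : Measure (Ed d)) [IsProbabilityMeasure Q] :
    (Measure.infinitePi (fun _ : ℕ => Q)).map (fun x => (x 0, x 1)) = Q.prod Q := by
  symm
  refine Measure.prod_eq fun s t hs ht => ?_
  rw [Measure.map_apply (by fun_prop) (hs.prod ht)]
  have : (fun x : ℕ → Ed d => (x 0, x 1)) ⁻¹' (s ×ˢ t) =
      (({0, 1} : Finset ℕ) : Set ℕ).pi (fun i => if i = 0 then s else t) := by
    ext x
    simp
  rw [this, Measure.infinitePi_pi _ (fun i _ => by split_ifs <;> assumption)]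
  simp

theorem aux_cost {d : ℕ} (c : Ed d → Ed d → ℝ≥0∞)
    (hmeas : Measurable fun p : Ed d × Ed d => c p.1 p.2) (γ : Measure (ℕ → Ed d)) :
    Cinf c γ = ∫⁻ p, c p.1 p.2 ∂(γ.map (fun x => (x 0, x 1))) := by
  rw [lintegral_map hmeas (by fun_prop)]
  rfl

/-- Theorem 2.7 (reformulation via de Finetti):
`F_∞^OT[μ] = inf { ∫ c dμ₂ : μ₂ = ∫ Q⊗Q dν(Q), μ = ∫ Q dν(Q), ν ∈ P(P(ℝ^d)) }`,
and `γ = ∫ Q^⊗∞ dν(Q)` minimizes the infinite-body problem iff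
`μ₂ = ∫ Q⊗Q dν(Q)` attains that infimum. -/
theorem FinfOT_eq_inf_over_deFinetti_mixtures
    {d : ℕ} (c : Ed d → Ed d → ℝ≥0∞)
    (hmeas : Measurable fun p : Ed d × Ed d => c p.1 p.2)
    (hsymm : ∀ x y, c x y = c y x)
    (μ : Measure (Ed d)) [IsProbabilityMeasure μ] :
    FinfOT c μ =
      (⨅ (μ₂ : Measure (Ed d × Ed d))
        (_ : ∃ ν : Measure (Measure (Ed d)), IsProbOnProb ν ∧
              IsMixtureOfSquares μ₂ ν ∧ IsMixture μ ν),
        ∫⁻ p, c p.1 p.2 ∂μ₂) ∧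
    (∀ (ν : Measure (Measure (Ed d))), IsProbOnProb ν → IsMixture μ ν →
      ∀ (γ : Measure (ℕ → Ed d)) (μ₂ : Measure (Ed d × Ed d)),
        IsProbabilityMeasure γ → IsMixtureOfInfinitePowers γ ν → IsMixtureOfSquares μ₂ ν →
        (Cinf c γ = FinfOT c μ ↔ ∫⁻ p, c p.1 p.2 ∂μ₂ = FinfOT c μ)) := by
  refine ⟨le_antisymm ?_ ?_, ?_⟩
  · refine le_iInf₂ fun μ₂ hex => ?_
    obtain ⟨ν, ⟨hν, hνp⟩, h2, h1⟩ := hex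
    have hae := (measurable_auxPow (d := d)).aemeasurable (μ := ν)
    let γ := ν.bind auxPow
    have hap : ∀ s, MeasurableSet s → γ s = ∫⁻ Q, auxPow Q s ∂ν := fun s hs =>
      Measure.bind_apply hs hae
    have hpr : IsProbabilityMeasure γ := ⟨by rw [hap _ MeasurableSet.univ]; simp⟩
    have hex : IsExchangeable γ := by
      intro σ _
      have hm : Measurable (fun (x : ℕ → Ed d) n => x (σ n)) := by fun_prop
      ext s hs
      rw [Measure.map_apply hm hs, hap _ (hm hs), hap _ hs]
      refine lintegral_congr_ae ?_
      filter_upwards [hνp] with Q hQ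
      rw [auxPow_eq, ← Measure.map_apply hm hs, aux_exch]
    have hmar : HasMarginal γ μ := by
      intro n
      have hm : Measurable (fun (x : ℕ → Ed d) => x n) := by fun_prop
      ext s hs
      rw [Measure.map_apply hm hs, hap _ (hm hs), h1 s hs]
      refine lintegral_congr_ae ?_
      filter_upwards [hνp] with Q hQ
      rw [auxPow_eq, ← Measure.map_apply hm hs, Measure.infinitePi_map_eval]
    have hpair : γ.map (fun x => (x 0, x 1)) = μ₂ := by
      have hm : Measurable (fun (x : ℕ → Ed d) => (x 0, x 1)) := by fun_prop
      ext s hs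
      rw [Measure.map_apply hm hs, hap _ (hm hs), h2 s hs]
      refine lintegral_congr_ae ?_
      filter_upwards [hνp] with Q hQ
      rw [auxPow_eq, ← Measure.map_apply hm hs, aux_pair]
    rw [← hpair, ← aux_cost c hmeas]
    exact iInf_le_of_le γ (iInf_le_of_le hpr (iInf_le_of_le hex (iInf_le _ hmar)))
  · refine le_iInf fun γ => le_iInf fun hpr => le_iInf fun hex => le_iInf fun hmar => ?_
    rw [aux_cost c hmeas]
    refine iInf_le_of_le (γ.map (fun x => (x 0, x 1))) (iInf_le _ ?_)
    obtain ⟨κ, hκ, hA⟩ := aux_deFinetti γ hex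
    have hp : Measurable fun x : ℕ → Ed d => (x 0, x 1) := by fun_prop
    have hm2 : Measurable fun y => (κ ×ₖ κ) y := Kernel.measurable _
    have hpair : γ.map (fun x => (x 0, x 1)) = γ.bind (κ ×ₖ κ) := by
      have := Measure.isProbabilityMeasure_map (μ := γ) hp.aemeasurable
      refine Measure.ext_prod fun {s} {t} hs ht => ?_
      rw [Measure.map_apply hp (hs.prod ht), hA s t hs ht, Measure.bind_apply (hs.prod ht)
        (Kernel.aemeasurable _)]
      simp [Kernel.prod_apply, Measure.prod_prod]
    have hνp : ∀ᵐ Q ∂(γ.map κ), IsProbabilityMeasure Q := by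
      have hP : MeasurableSet {Q : Measure (Ed d) | IsProbabilityMeasure Q} := by
        have : {Q : Measure (Ed d) | IsProbabilityMeasure Q} = (fun Q => Q Set.univ) ⁻¹' {1} := by
          ext Q
          exact isProbabilityMeasure_iff
        rw [this]
        exact Measure.measurable_coe MeasurableSet.univ (measurableSet_singleton 1)
      rw [ae_map_iff κ.aemeasurable hP]
      exact Eventually.of_forall fun y => inferInstance
    refine ⟨γ.map κ, ⟨Measure.isProbabilityMeasure_map κ.aemeasurable, hνp⟩, ?_, ?_⟩
    · intro s hs
      have hm : Measurable fun Q : Measure (Ed d) =>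
          ((auxPow Q).map (fun x => (x 0, x 1))) s :=
        (Measure.measurable_coe hs).comp ((Measure.measurable_map _ hp).comp measurable_auxPow)
      have e : ∫⁻ Q, (Q.prod Q) s ∂(γ.map κ) =
          ∫⁻ Q, ((auxPow Q).map (fun x => (x 0, x 1))) s ∂(γ.map κ) := by
        refine lintegral_congr_ae ?_
        filter_upwards [hνp] with Q hQ
        rw [auxPow_eq, aux_pair]
      rw [e, lintegral_map hm κ.measurable, hpair, Measure.bind_apply hs (Kernel.aemeasurable _)]
      refine lintegral_congr fun y => ?_
      rw [auxPow_eq, aux_pair, Kernel.prod_apply]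
    · intro s hs
      rw [lintegral_map (Measure.measurable_coe hs) κ.measurable, ← hmar 0,
        Measure.map_apply (by fun_prop) hs]
      have := hA s Set.univ hs MeasurableSet.univ
      simp only [measure_univ, mul_one] at this
      rw [← this]
      congr 1
      ext x
      simp
  · intro ν hν _ γ μ₂ hpr hγ h2
    have hpair : γ.map (fun x => (x 0, x 1)) = μ₂ := by
      have hm : Measurable (fun (x : ℕ → Ed d) => (x 0, x 1)) := by fun_prop
      have hm' : Measurable (fun (x : ℕ → Ed d) (i : Fin 2) => x i.val) := by fun_prop
      have hf : Measurable (MeasurableEquiv.finTwoArrow (α := Ed d)) :=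
        MeasurableEquiv.measurable _
      ext s hs
      have := hγ 2 (MeasurableEquiv.finTwoArrow ⁻¹' s) (hf hs)
      rw [Measure.map_apply hm' (hf hs)] at this
      rw [Measure.map_apply hm hs, h2 s hs]
      refine Eq.trans ?_ (this.trans ?_)
      · rfl
      · refine lintegral_congr_ae ?_
        filter_upwards [hν.2] with Q hQ
        rw [← Measure.map_apply hf hs, (measurePreserving_finTwoArrow Q).map_eq]
    rw [← hpair, ← aux_cost c hmeas]
end
end

section
/- Let N ≥ 2, let c : ℝ^d × ℝ^d → [0,∞] be Borel measurable, symmetric and lower semi-continuous, and let μ be a Borel probability measure on ℝ^d. Then there exists γ_N ∈ P_sym^N(ℝ^d) with all one-coordinate marginals equal to μ attaining the infimum defining F_N^OT[μ], and there exists an N-representable symmetric probability measure μ₂ on ℝ^d × ℝ^d with both marginals μ such that ∫ c dμ₂ = F_N^OT[μ]. -/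
open MeasureTheory ENNReal Filter Topology ProbabilityTheory

noncomputable section

/-- A measure on `(ℝ^d)^N` is symmetric if it is invariant under all permutations
of the coordinates. -/
def IsSymmetricN {d N : ℕ} (γ : Measure (Fin N → Ed d)) : Prop :=
  ∀ σ : Equiv.Perm (Fin N), γ.map (fun x i => x (σ i)) = γ

/-- The `N`-body cost `Σ_{1 ≤ i < j ≤ N} c(x_i, x_j)`. -/
def pairCost {d N : ℕ} (c : Ed d → Ed d → ℝ≥0∞) (x : Fin N → Ed d) : ℝ≥0∞ :=
  ∑ i : Fin N, ∑ j : Fin N, if i < j then c (x i) (x j) else 0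

/-- The optimal cost per particle pair of the `N`-body optimal transport problem:
`F_N^OT[μ] = (1/binom(N,2)) inf { ∫ Σ_{i<j} c(x_i,x_j) dγ_N : γ_N ∈ P_sym^N(ℝ^d), γ_N ↦ μ }`. -/
def FNOT {d : ℕ} (N : ℕ) (c : Ed d → Ed d → ℝ≥0∞) (μ : Measure (Ed d)) : ℝ≥0∞ :=
  (N.choose 2 : ℝ≥0∞)⁻¹ *
    ⨅ (γ : Measure (Fin N → Ed d)) (_ : IsProbabilityMeasure γ) (_ : IsSymmetricN γ)
      (_ : ∀ i : Fin N, γ.map (fun x => x i) = μ), ∫⁻ x, pairCost c x ∂γ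

/-- `μ₂` is `N`-representable: it is the two-coordinate marginal of a symmetric
probability measure on `(ℝ^d)^N`. -/
def NRep {d : ℕ} (N : ℕ) (μ₂ : Measure (Ed d × Ed d)) : Prop :=
  ∃ γ : Measure (Fin N → Ed d), IsProbabilityMeasure γ ∧ IsSymmetricN γ ∧
    ∀ i j : Fin N, i ≠ j → γ.map (fun x => (x i, x j)) = μ₂

theorem aux_count (N : ℕ) (A : ℝ≥0∞) :
    (∑ i : Fin N, ∑ j : Fin N, if i < j then A else 0) = (N.choose 2 : ℝ≥0∞) * A := by
  induction N with
  | zero => simp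
  | succ n ih =>
    rw [Fin.sum_univ_castSucc]
    simp only [Fin.sum_univ_castSucc, Fin.castSucc_lt_castSucc_iff, Fin.castSucc_lt_last, if_true]
    rw [Finset.sum_add_distrib, ih]
    have h : ∀ i : Fin n, ¬ Fin.last n < i.castSucc := fun i => (Fin.castSucc_lt_last i).not_gt
    simp [h, Nat.choose_succ_succ]
    ring

theorem aux_lsc {X : Type*} [TopologicalSpace X] [TopologicalSpace.PseudoMetrizableSpace X]
    [TopologicalSpace.SeparableSpace X] [MeasurableSpace X] [BorelSpace X]
    {f : X → ℝ≥0∞} (hf : LowerSemicontinuous f) :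
    LowerSemicontinuous (fun γ : ProbabilityMeasure X => ∫⁻ x, f x ∂(γ : Measure X)) := by
  have hfm : Measurable f := hf.measurable
  have key : ∀ γ : ProbabilityMeasure X, ∫⁻ x, f x ∂(γ : Measure X)
      = ⨆ n : ℕ, ∫⁻ x, min (f x) n ∂(γ : Measure X) := by
    intro γ
    rw [← lintegral_iSup (fun n => hfm.min measurable_const)
      (fun m n hmn x => min_le_min le_rfl (by exact_mod_cast hmn))]
    congr 1
    ext x
    change f x = ⨆ n : ℕ, f x ⊓ (n : ℝ≥0∞)
    rw [← inf_iSup_eq, ENNReal.iSup_natCast, inf_top_eq]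
  simp_rw [key]
  refine lowerSemicontinuous_iSup fun n => ?_
  have hfin : ∀ x, min (f x) (n : ℝ≥0∞) ≠ ∞ := fun x =>
    ((min_le_right _ _).trans_lt (ENNReal.natCast_lt_top n)).ne
  have e : ∀ γ : ProbabilityMeasure X, ∫⁻ x, min (f x) n ∂(γ : Measure X)
      = ∫⁻ t in Set.Ioi (0:ℝ), (γ : Measure X) {x | t < (min (f x) n).toReal} := by
    intro γ
    rw [← lintegral_eq_lintegral_meas_lt _ (Eventually.of_forall fun x => ENNReal.toReal_nonneg)
      (hfm.min measurable_const).ennreal_toReal.aemeasurable]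
    simp_rw [ENNReal.ofReal_toReal (hfin _)]
  simp_rw [e]
  rw [lowerSemicontinuous_iff_le_liminf]
  intro γ
  refine le_trans ?_ (lintegral_liminf_le (fun γ => Antitone.measurable (fun s t hst ↦
            measure_mono (fun ω hω ↦ lt_of_le_of_lt hst hω))))
  refine setLIntegral_mono' measurableSet_Ioi fun t ht => ?_
  have ho : IsOpen {x | t < (min (f x) (n : ℝ≥0∞)).toReal} := by
    have : {x | t < (min (f x) (n : ℝ≥0∞)).toReal} =
        {x | ENNReal.ofReal t < f x} ∩ {_x | ENNReal.ofReal t < n} := by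
      ext x
      simp only [Set.mem_ofPred_eq, Set.mem_inter_iff, ← lt_min_iff]
      exact (ENNReal.ofReal_lt_iff_lt_toReal (le_of_lt ht) (hfin x)).symm
    rw [this]
    exact (hf.isOpen_preimage _).inter isOpen_const
  let : PseudoMetricSpace X := TopologicalSpace.pseudoMetrizableSpacePseudoMetric X
  exact ProbabilityMeasure.le_liminf_measure_open_of_tendsto tendsto_id ho

theorem aux_tight {d N : ℕ} (hN : 2 ≤ N) (μ : Measure (Ed d)) [IsProbabilityMeasure μ] :
    IsTightMeasureSet {γ : Measure (Fin N → Ed d) | ∀ i : Fin N, γ.map (fun x => x i) = μ} := by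
  rw [isTightMeasureSet_iff_exists_isCompact_measure_compl_le]
  intro ε hε
  have h1 : IsTightMeasureSet {μ} := isTightMeasureSet_singleton
  rw [isTightMeasureSet_iff_exists_isCompact_measure_compl_le] at h1
  obtain ⟨K, hK, hKμ⟩ := h1 (ε / N) (ENNReal.div_pos hε.ne' (ENNReal.natCast_ne_top N))
  refine ⟨Set.univ.pi fun _ => K, isCompact_univ_pi fun _ => hK, fun γ hγ => ?_⟩
  have hs : (Set.univ.pi fun _ : Fin N => K)ᶜ ⊆ ⋃ i : Fin N, (fun x : Fin N → Ed d => x i) ⁻¹' Kᶜ := by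
    intro x hx
    simpa [Set.mem_pi] using hx
  calc γ (Set.univ.pi fun _ : Fin N => K)ᶜ
      ≤ ∑ i : Fin N, γ ((fun x : Fin N → Ed d => x i) ⁻¹' Kᶜ) :=
        (measure_mono hs).trans (measure_iUnion_fintype_le _ _)
    _ ≤ ∑ i : Fin N, ε / N := by
        refine Finset.sum_le_sum fun i _ => ?_
        rw [← Measure.map_apply (measurable_pi_apply i) hK.isClosed.measurableSet.compl, hγ i]
        exact hKμ μ rfl
    _ = ε := by
        simp only [Finset.sum_const, Finset.card_univ, Fintype.card_fin, nsmul_eq_mul]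
        exact ENNReal.mul_div_cancel (by simp; omega) (ENNReal.natCast_ne_top N)

theorem aux_cont {d N : ℕ} (σ : Equiv.Perm (Fin N)) :
    Continuous (fun (x : Fin N → Ed d) i => x (σ i)) := by fun_prop

theorem aux_min {d : ℕ} (N : ℕ) (hN : 2 ≤ N) (c : Ed d → Ed d → ℝ≥0∞)
    (hlsc : LowerSemicontinuous fun p : Ed d × Ed d => c p.1 p.2)
    (μ : Measure (Ed d)) [IsProbabilityMeasure μ] :
    ∃ γ : Measure (Fin N → Ed d), IsProbabilityMeasure γ ∧ IsSymmetricN γ ∧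
      (∀ i : Fin N, γ.map (fun x => x i) = μ) ∧
      (N.choose 2 : ℝ≥0∞)⁻¹ * ∫⁻ x, pairCost c x ∂γ = FNOT N c μ := by
  let S : Set (ProbabilityMeasure (Fin N → Ed d)) :=
    {γ | IsSymmetricN (γ : Measure (Fin N → Ed d)) ∧
      ∀ i : Fin N, (γ : Measure (Fin N → Ed d)).map (fun x => x i) = μ}
  have hScl : IsClosed S := by
    have : S = (⋂ σ : Equiv.Perm (Fin N), {γ : ProbabilityMeasure (Fin N → Ed d) |
          γ.map (aux_cont σ).measurable.aemeasurable = γ}) ∩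
        ⋂ i : Fin N, {γ : ProbabilityMeasure (Fin N → Ed d) |
          γ.map (continuous_apply i).measurable.aemeasurable = (⟨μ, inferInstance⟩ : ProbabilityMeasure (Ed d))} := by
      ext γ
      simp only [S, IsSymmetricN, Set.mem_ofPred_eq, Set.mem_inter_iff, Set.mem_iInter]
      refine and_congr (forall_congr' fun σ => ?_) (forall_congr' fun i => ?_)
      · exact (Subtype.ext_iff (a1 := γ.map (aux_cont σ).measurable.aemeasurable)
          (a2 := γ)).symm
      · exact (Subtype.ext_iff (a1 := γ.map (continuous_apply i).measurable.aemeasurable)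
          (a2 := (⟨μ, inferInstance⟩ : ProbabilityMeasure (Ed d)))).symm
    rw [this]
    refine (isClosed_iInter fun σ => isClosed_eq ?_ continuous_id).inter
      (isClosed_iInter fun i => isClosed_eq ?_ continuous_const)
    · exact ProbabilityMeasure.continuous_map (aux_cont σ)
    · exact ProbabilityMeasure.continuous_map (continuous_apply i)
  have hScomp : IsCompact S := by
    rw [← hScl.closure_eq]
    apply isCompact_closure_of_isTightMeasureSet
    refine (aux_tight hN μ).subset ?_
    rintro _ ⟨γ, hγ, rfl⟩
    exact hγ.2
  have hne : S.Nonempty := by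
    refine ⟨⟨Measure.pi fun _ => μ, inferInstance⟩, fun σ => ?_, fun i => ?_⟩
    · have h := (measurePreserving_piCongrLeft (fun _ : Fin N => μ) σ.symm).map_eq
      have e : (MeasurableEquiv.piCongrLeft (fun _ : Fin N => Ed d) σ.symm : _ → _) =
          fun (x : Fin N → Ed d) i => x (σ i) := by
        ext x i : 2
        have := Equiv.piCongrLeft_apply_apply (fun _ : Fin N => Ed d) σ.symm x (σ i)
        rw [MeasurableEquiv.coe_piCongrLeft]
        simpa using this
      rw [e] at h
      exact h
    · exact (measurePreserving_eval (fun _ : Fin N => μ) i).map_eq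
  have hpc : LowerSemicontinuous (pairCost c : (Fin N → Ed d) → ℝ≥0∞) := by
    unfold pairCost
    refine lowerSemicontinuous_sum fun i _ => lowerSemicontinuous_sum fun j _ => ?_
    by_cases h : i < j
    · simp only [h, if_true]
      have hcij : Continuous fun x : Fin N → Ed d => (x i, x j) :=
        (continuous_apply i).prodMk (continuous_apply j)
      exact fun x y hy => hcij.continuousAt.eventually (hlsc (x i, x j) y hy)
    · simp only [h, if_false]
      exact lowerSemicontinuous_const
  obtain ⟨γ, hγ, hmin⟩ := LowerSemicontinuousOn.exists_isMinOn hne hScomp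
    ((aux_lsc hpc).lowerSemicontinuousOn S)
  refine ⟨γ, inferInstance, hγ.1, hγ.2, ?_⟩
  unfold FNOT
  congr 1
  apply le_antisymm
  · refine le_iInf fun γ' => le_iInf fun h1 => le_iInf fun h2 => le_iInf fun h3 => ?_
    exact hmin (show (⟨γ', h1⟩ : ProbabilityMeasure _) ∈ S from ⟨h2, h3⟩)
  · exact iInf_le_of_le γ <| iInf_le_of_le inferInstance <| iInf_le_of_le hγ.1 <|
      iInf_le_of_le hγ.2 le_rfl

/-- Proposition 3.1 (existence of minimizers of the `N`-body OT problem): for a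
symmetric, Borel measurable, lower semi-continuous cost there is a symmetric
`γ_N` with all one-coordinate marginals `μ` attaining the infimum defining
`F_N^OT[μ]`, and an `N`-representable pair measure `μ₂` with marginals `μ` and
`∫ c dμ₂ = F_N^OT[μ]`. -/
theorem N_body_OT_minimizer_exists
    {d : ℕ} (N : ℕ) (hN : 2 ≤ N) (c : Ed d → Ed d → ℝ≥0∞)
    (hmeas : Measurable fun p : Ed d × Ed d => c p.1 p.2)
    (hsymm : ∀ x y, c x y = c y x)
    (hlsc : LowerSemicontinuous fun p : Ed d × Ed d => c p.1 p.2)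
    (μ : Measure (Ed d)) [IsProbabilityMeasure μ] :
    (∃ γ : Measure (Fin N → Ed d), IsProbabilityMeasure γ ∧ IsSymmetricN γ ∧
      (∀ i : Fin N, γ.map (fun x => x i) = μ) ∧
      (N.choose 2 : ℝ≥0∞)⁻¹ * ∫⁻ x, pairCost c x ∂γ = FNOT N c μ) ∧
    (∃ μ₂ : Measure (Ed d × Ed d), IsProbabilityMeasure μ₂ ∧
      μ₂.map Prod.swap = μ₂ ∧ μ₂.map Prod.fst = μ ∧ μ₂.map Prod.snd = μ ∧
      NRep N μ₂ ∧ ∫⁻ p, c p.1 p.2 ∂μ₂ = FNOT N c μ) := by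
  obtain ⟨γ, hp, hs, hm, hc⟩ := aux_min N hN c hlsc μ
  refine ⟨⟨γ, hp, hs, hm, hc⟩, ?_⟩
  have hmp : ∀ i j : Fin N, Measurable (fun x : Fin N → Ed d => (x i, x j)) := fun i j =>
    (measurable_pi_apply i).prodMk (measurable_pi_apply j)
  let a : Fin N := ⟨0, by omega⟩
  let b : Fin N := ⟨1, by omega⟩
  have hab : a ≠ b := by simp [a, b]
  have hrep : ∀ i j : Fin N, i ≠ j →
      γ.map (fun x => (x i, x j)) = γ.map (fun x => (x a, x b)) := by
    intro i j hij
    obtain ⟨σ, hσ⟩ := Equiv.Perm.exists_extending_pair ![a, b] ![i, j]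
      (by intro u v; fin_cases u <;> fin_cases v <;> simp [hab, hab.symm])
      (by intro u v; fin_cases u <;> fin_cases v <;> simp [hij, hij.symm])
    have h1 : σ a = i := by simpa using hσ 0
    have h2 : σ b = j := by simpa using hσ 1
    conv_rhs => rw [← hs σ, Measure.map_map (hmp a b) (aux_cont σ).measurable]
    simp only [Function.comp_def, h1, h2]
  refine ⟨γ.map (fun x => (x a, x b)), Measure.isProbabilityMeasure_map (hmp a b).aemeasurable,
    ?_, ?_, ?_, ⟨γ, hp, hs, hrep⟩, ?_⟩
  · rw [Measure.map_map measurable_swap (hmp a b)]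
    exact hrep b a hab.symm
  · rw [Measure.map_map measurable_fst (hmp a b)]
    exact hm a
  · rw [Measure.map_map measurable_snd (hmp a b)]
    exact hm b
  · rw [← hc]
    have h : ∫⁻ x, pairCost c x ∂γ =
        (N.choose 2 : ℝ≥0∞) * ∫⁻ p, c p.1 p.2 ∂(γ.map (fun x => (x a, x b))) := by
      rw [← aux_count]
      have hm2 : ∀ i j : Fin N, Measurable fun x : Fin N → Ed d =>
          if i < j then c (x i) (x j) else 0 := by
        intro i j
        by_cases h : i < j
        · simp only [h, if_true]
          exact hmeas.comp (hmp i j)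
        · simp only [h, if_false]
          exact measurable_const
      unfold pairCost
      rw [lintegral_finsetSum _ fun i _ => Finset.measurable_fun_sum _ fun j _ => hm2 i j]
      refine Finset.sum_congr rfl fun i _ => ?_
      rw [lintegral_finsetSum _ fun j _ => hm2 i j]
      refine Finset.sum_congr rfl fun j _ => ?_
      by_cases h : i < j
      · simp only [h, if_true]
        rw [← hrep i j h.ne, lintegral_map hmeas (hmp i j)]
      · simp [h]
    have h0 : (N.choose 2 : ℝ≥0∞) ≠ 0 := by
      exact_mod_cast (Nat.choose_pos hN).ne'
    rw [h, ← mul_assoc, ENNReal.inv_mul_cancel h0 (ENNReal.natCast_ne_top _), one_mul]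
end
end
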